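/- Let A₁, A₂, A₃ be hermitian 4×4 complex matrices whose joint numerical range W = W(A₁,A₂,A₃) has dimension 3. If F₁, F₂, F₃ are three mutually distinct non-elliptic faces of W, then the intersection F₁ ∩ F₂ ∩ F₃ is a singleton {p} and p is a corner point of W; in particular, the three faces have a point in common. -/

import Mathlib

open Matrix ComplexOrder

noncomputable section

/-- A density matrix: positive semidefinite with unit trace. -/
def IsDensity {n : Type*} [Fintype n] (ρ : Matrix n n ℂ) : Prop :=
  ρ.PosSemidef ∧ ρ.trace = 1

/-- The measurement map `ρ ↦ (tr ρA₁, …, tr ρA_k)` (the traces are real for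
hermitian matrices). -/
def wpt {n : Type*} [Fintype n] {k : ℕ} (A : Fin k → Matrix n n ℂ)
    (ρ : Matrix n n ℂ) : Fin k → ℝ :=
  fun i => ((ρ * A i).trace).re

/-- The joint numerical range of `k` matrices. -/
def JNR {n : Type*} [Fintype n] {k : ℕ} (A : Fin k → Matrix n n ℂ) :
    Set (Fin k → ℝ) :=
  wpt A '' {ρ | IsDensity ρ}

/-- `F` is a face of the convex set `C`: a convex subset such that whenever an
open segment between two points of `C` meets `F`, both endpoints lie in `F`. -/
def IsFaceOf {E : Type*} [AddCommGroup E] [Module ℝ E] (C F : Set E) : Prop :=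
  Convex ℝ F ∧ IsExtreme ℝ C F

/-- The dimension of a convex set: the dimension of its affine hull. -/
def convDim {E : Type*} [AddCommGroup E] [Module ℝ E] (F : Set E) : ℕ :=
  Module.finrank ℝ (affineSpan ℝ F).direction

/-- Euclidean dot product on `Fin d → ℝ`. -/
def dotR {d : ℕ} (u v : Fin d → ℝ) : ℝ := ∑ i, u i * v i

/-- `F` is an exposed face of `C`: the set of minimizers of a linear functional. -/
def IsExposedFace {d : ℕ} (C F : Set (Fin d → ℝ)) : Prop :=
  ∃ u : Fin d → ℝ, F = {x ∈ C | ∀ y ∈ C, dotR u x ≤ dotR u y}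

/-- The normal cone of `C` at `p`. -/
def normalConeAt {d : ℕ} (C : Set (Fin d → ℝ)) (p : Fin d → ℝ) :
    Set (Fin d → ℝ) :=
  {u | ∀ y ∈ C, 0 ≤ dotR (y - p) u}

/-- `p` is a corner point of `C` if the normal cone of `C` at `p` spans `ℝ^d`. -/
def IsCornerPoint {d : ℕ} (C : Set (Fin d → ℝ)) (p : Fin d → ℝ) : Prop :=
  p ∈ C ∧ Submodule.span ℝ (normalConeAt C p) = ⊤

/-- The closed unit disk of `ℝ²`. -/
def unitDisk2 : Set (Fin 2 → ℝ) := {v | v 0 ^ 2 + v 1 ^ 2 ≤ 1}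

/-- An elliptic disk in `ℝ³`: the image of the closed unit disk of `ℝ²` under an
injective affine map. -/
def IsEllipticDisk (F : Set (Fin 3 → ℝ)) : Prop :=
  ∃ f : (Fin 2 → ℝ) →ᵃ[ℝ] (Fin 3 → ℝ), Function.Injective f ∧ F = f '' unitDisk2

/-- A non-elliptic face of `W`: a two-dimensional face that is not an elliptic
disk. -/
def IsNonEllipticFace (W F : Set (Fin 3 → ℝ)) : Prop :=
  IsFaceOf W F ∧ convDim F = 2 ∧ ¬ IsEllipticDisk F

/-- A rank-3 face of the joint numerical range of `A`. -/
def IsRank3Face {k : ℕ} (A : Fin k → Matrix (Fin 4) (Fin 4) ℂ)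
    (F : Set (Fin k → ℝ)) : Prop :=
  F.Nonempty ∧ IsFaceOf (JNR A) F ∧
    ∃ P : Matrix (Fin 4) (Fin 4) ℂ, Pᴴ = P ∧ P * P = P ∧ P.rank = 3 ∧
      ∀ ρ : Matrix (Fin 4) (Fin 4) ℂ, IsDensity ρ → (wpt A ρ ∈ F ↔ P * ρ * P = ρ)

lemma extend_beyond {F : Set (Fin 3 → ℝ)} {p y : Fin 3 → ℝ} (hp : p ∈ intrinsicInterior ℝ F)
    (hy : y ∈ affineSpan ℝ F) : ∃ e : ℝ, 0 < e ∧ p + e • (p - y) ∈ F := by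
  rw [mem_intrinsicInterior] at hp
  obtain ⟨q, hq, rfl⟩ := hp
  let y' : affineSpan ℝ F := ⟨y, hy⟩
  have : Nonempty (affineSpan ℝ F) := ⟨y'⟩
  let g : ℝ → affineSpan ℝ F := fun t => AffineMap.lineMap (k := ℝ) q y' (-t)
  have hgc : Continuous g := by
    have : Continuous (fun t : ℝ => ((g t : affineSpan ℝ F) : Fin 3 → ℝ)) := by
      have : (fun t : ℝ => ((g t : affineSpan ℝ F) : Fin 3 → ℝ)) =
          fun t => (q : Fin 3 → ℝ) + t • ((q : Fin 3 → ℝ) - y) := by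
        funext t
        simp [g, y', AffineMap.lineMap_apply]
        module
      rw [this]; fun_prop
    exact continuous_induced_rng.2 this
  have h0 : g 0 = q := by simp [g]
  have : ∀ᶠ t in nhds (0:ℝ), g t ∈ interior ((↑) ⁻¹' F : Set (affineSpan ℝ F)) :=
    hgc.continuousAt.eventually_mem (by rw [h0]; exact isOpen_interior.mem_nhds hq)
  rw [Metric.eventually_nhds_iff] at this
  obtain ⟨e, he, h⟩ := this
  refine ⟨e / 2, by positivity, ?_⟩
  have h2 := interior_subset (h (y := e/2) (by simp [abs_of_pos he]; linarith))
  have h3 : ((g (e/2) : affineSpan ℝ F) : Fin 3 → ℝ) ∈ F := h2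
  convert h3 using 1
  simp [g, y', AffineMap.lineMap_apply]
  module

lemma span_top {W : Set (Fin 3 → ℝ)} (hd : convDim W = 3) :
    W.Nonempty ∧ affineSpan ℝ W = ⊤ := by
  have hne : W.Nonempty := by
    by_contra h
    rw [Set.not_nonempty_iff_eq_empty] at h
    subst h
    rw [convDim, AffineSubspace.span_empty, AffineSubspace.direction_bot] at hd; simp at hd
  refine ⟨hne, ?_⟩
  rw [← AffineSubspace.direction_eq_top_iff_of_nonempty ((affineSpan_nonempty ℝ).2 hne)]
  apply Submodule.eq_top_of_finrank_eq
  rw [← convDim.eq_1, hd]; simp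

lemma extreme_absorb {W F : Set (Fin 3 → ℝ)} (hF : IsExtreme ℝ W F) {p y : Fin 3 → ℝ} (hp : p ∈ F)
    (hy : y ∈ W) {e : ℝ} (he : 0 < e) (h : p + e • (p - y) ∈ W) : y ∈ F := by
  refine hF.2 hy h hp ⟨e / (1 + e), 1 / (1 + e), by positivity, by positivity, by field_simp; ring, ?_⟩
  ext i
  simp
  field_simp
  ring

def dotL (u : Fin 3 → ℝ) : (Fin 3 → ℝ) →ₗ[ℝ] ℝ where
  toFun x := dotR u x
  map_add' x y := by simp [dotR, mul_add, Finset.sum_add_distrib]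
  map_smul' c x := by simp [dotR, Finset.mul_sum, mul_left_comm]

lemma face_exposed (W F : Set (Fin 3 → ℝ)) (hW : Convex ℝ W) (hd : convDim W = 3)
    (hF : IsFaceOf W F) (hF2 : convDim F = 2) :
    ∃ (u : Fin 3 → ℝ) (l : ℝ), (∀ y ∈ W, l ≤ dotR u y) ∧ F = {x ∈ W | dotR u x = l} := by
  obtain ⟨hWne, hWtop⟩ := span_top hd
  have hFne : F.Nonempty := by
    by_contra h
    rw [Set.not_nonempty_iff_eq_empty] at h
    subst h
    rw [convDim, AffineSubspace.span_empty, AffineSubspace.direction_bot] at hF2; simp at hF2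
  obtain ⟨p, hp⟩ := hFne.intrinsicInterior hF.1
  have hpF := intrinsicInterior_subset hp
  have hFW := hF.2.1
  have hint : (interior W).Nonempty := hW.interior_nonempty_iff_affineSpan_eq_top.2 hWtop
  have hpi : p ∉ interior W := by
    intro hpi
    have : F = W := by
      apply Set.Subset.antisymm hFW
      intro y hy
      have hc : ContinuousAt (fun t : ℝ => p + t • (p - y)) 0 := by fun_prop
      have : ∀ᶠ t in nhds (0:ℝ), p + t • (p - y) ∈ interior W :=
        hc.eventually_mem (by simpa using isOpen_interior.mem_nhds hpi)
      rw [Metric.eventually_nhds_iff] at this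
      obtain ⟨e, he, h⟩ := this
      have h2 := interior_subset (h (y := e/2) (by simp [abs_of_pos he]; linarith))
      exact extreme_absorb hF.2 hpF hy (by positivity) h2
    rw [this] at hF2; omega
  obtain ⟨f, hf⟩ := geometric_hahn_banach_point_open hW.interior isOpen_interior hpi
  obtain ⟨u, hu⟩ : ∃ u : Fin 3 → ℝ, ∀ x, f x = dotR u x := by
    refine ⟨fun i => f (Pi.single i 1), fun x => ?_⟩
    conv_lhs => rw [pi_eq_sum_univ' x]
    simp [dotR, mul_comm]
  have hle : ∀ y ∈ W, f p ≤ f y := by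
    intro y hy
    have : y ∈ closure (interior W) := by
      rw [hW.closure_interior_eq_closure_of_nonempty_interior hint]; exact subset_closure hy
    exact closure_minimal (s := interior W) (t := {y | f p ≤ f y}) (fun z hz => (hf z hz).le)
      (isClosed_le continuous_const f.continuous) this
  have hFf : ∀ y ∈ F, f y = f p := by
    intro y hy
    obtain ⟨e, he, h⟩ := extend_beyond hp (subset_affineSpan ℝ F hy)
    have h1 := hle _ (hFW h)
    have h2 := hle _ (hFW hy)
    simp at h1
    nlinarith [(mul_nonneg_iff_of_pos_left he).1 h1]
  have hf0 : f.toLinearMap ≠ 0 := by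
    intro h0
    obtain ⟨z, hz⟩ := hint
    have := hf z hz
    have e1 : ∀ x, f x = 0 := fun x => by
      change f.toLinearMap x = 0
      rw [h0]; rfl
    simp [e1] at this
  have hker : (affineSpan ℝ F).direction = LinearMap.ker f.toLinearMap := by
    apply Submodule.eq_of_le_of_finrank_le
    · rw [direction_affineSpan, vectorSpan_def, Submodule.span_le]
      rintro _ ⟨a, ha, b, hb, rfl⟩
      simp [hFf a ha, hFf b hb]
    · have := Module.Dual.finrank_ker_add_one_of_ne_zero (f := f.toLinearMap) hf0
      rw [← convDim.eq_1, hF2]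
      simp at this
      exact this.le
  refine ⟨u, f p, fun y hy => by rw [← hu]; exact hle y hy, ?_⟩
  ext y
  simp only [Set.mem_ofPred_eq, ← hu]
  refine ⟨fun h => ⟨hFW h, hFf y h⟩, fun ⟨h1, h2⟩ => ?_⟩
  have : y - p ∈ (affineSpan ℝ F).direction := by rw [hker]; simp [h2]
  have h3 := AffineSubspace.vadd_mem_of_mem_direction this (subset_affineSpan ℝ F hpF)
  simp at h3
  obtain ⟨e, he, h⟩ := extend_beyond hp h3
  exact extreme_absorb hF.2 hpF h1 he (hFW h)

lemma ball_elliptic {E : Type*} [NormedAddCommGroup E] [InnerProductSpace ℝ E]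
    [FiniteDimensional ℝ E] (T : E →ᵃ[ℝ] (Fin 3 → ℝ)) (F : Set (Fin 3 → ℝ))
    (hF : F = T '' Metric.closedBall 0 1) (hd : convDim F = 2) : IsEllipticDisk F := by
  set L := T.linear with hL
  have hT : ∀ x, T x = L x + T 0 := fun x => by
    have := T.map_vadd 0 x
    simpa using this
  have hr : Module.finrank ℝ (LinearMap.range L) = 2 := by
    rw [← hd, convDim, hF, ← AffineSubspace.map_span, AffineSubspace.map_direction]
    have : affineSpan ℝ (Metric.closedBall (0:E) 1) = ⊤ := by
      rw [← (convex_closedBall (0:E) 1).interior_nonempty_iff_affineSpan_eq_top]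
      exact ⟨0, Metric.ball_subset_interior_closedBall (by simp)⟩
    rw [this, AffineSubspace.direction_top, Submodule.map_top]
  let K := LinearMap.ker L
  have hk : Module.finrank ℝ Kᗮ = 2 := by
    have h1 := L.finrank_range_add_finrank_ker
    have h2 := K.finrank_add_finrank_orthogonal
    change _ + Module.finrank ℝ K = _ at h1
    omega
  let b : OrthonormalBasis (Fin 2) ℝ Kᗮ := (stdOrthonormalBasis ℝ Kᗮ).reindex (finCongr hk)
  let g : (Fin 2 → ℝ) →ₗ[ℝ] E :=
    Kᗮ.subtype ∘ₗ b.toBasis.equivFun.symm.toLinearMap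
  have hg : ∀ v, g v = ((b.repr.symm (WithLp.toLp 2 v) : Kᗮ) : E) := by
    intro v
    simp [g, ← OrthonormalBasis.sum_repr_symm]
  have hgn : ∀ v, ‖g v‖ ^ 2 = v 0 ^ 2 + v 1 ^ 2 := by
    intro v
    rw [hg, ← Submodule.coe_norm, LinearIsometryEquiv.norm_map, EuclideanSpace.norm_sq_eq]
    simp [Fin.sum_univ_two]
  have hginj : Function.Injective g := by
    intro v w h
    simpa [g] using h
  refine ⟨T.comp g.toAffineMap, ?_, ?_⟩
  · intro v w h
    simp only [AffineMap.coe_comp, Function.comp, LinearMap.coe_toAffineMap] at h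
    rw [hT, hT (g w)] at h
    have h1 : g (v - w) ∈ K := by
      simp only [K, LinearMap.mem_ker, map_sub, add_right_cancel h, sub_self]
    have h2 : g (v - w) ∈ Kᗮ := by rw [hg]; exact Submodule.coe_mem _
    have h3 : g (v - w) = 0 := by
      have := Submodule.inner_right_of_mem_orthogonal h1 h2
      simpa using this
    have := hginj (h3.trans (map_zero g).symm)
    exact sub_eq_zero.1 this
  · rw [hF]
    ext y
    constructor
    · rintro ⟨x, hx, rfl⟩
      have hx1 : ‖x‖ ≤ 1 := by simpa using hx
      let q : Kᗮ := Kᗮ.orthogonalProjectionOnto x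
      refine ⟨(b.repr q).ofLp, ?_, ?_⟩
      · have h1 := hgn (b.repr q).ofLp
        rw [hg] at h1
        simp only [WithLp.toLp_ofLp, LinearIsometryEquiv.symm_apply_apply] at h1
        rw [unitDisk2, Set.mem_ofPred_eq, ← h1]
        have : ‖(q : E)‖ ≤ ‖x‖ := Kᗮ.norm_orthogonalProjectionOnto_apply_le x
        nlinarith [norm_nonneg (q : E)]
      · simp only [AffineMap.coe_comp, Function.comp, LinearMap.coe_toAffineMap, hg,
          WithLp.toLp_ofLp, LinearIsometryEquiv.symm_apply_apply]
        rw [hT, hT x]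
        have : x - q ∈ K := by
          have := Kᗮ.sub_starProjection_mem_orthogonal x
          rwa [Submodule.orthogonal_orthogonal] at this
        have h5 : L (x - q) = 0 := this
        rw [map_sub, sub_eq_zero] at h5
        rw [h5]
    · rintro ⟨v, hv, rfl⟩
      refine ⟨g v, ?_, by simp⟩
      have : v 0 ^ 2 + v 1 ^ 2 ≤ 1 := hv
      rw [← hgn] at this
      simpa using this

lemma psd_zero_row {τ : Matrix (Fin 4) (Fin 4) ℂ} (h : τ.PosSemidef) {i : Fin 4}
    (hi : (τ i i).re = 0) (j : Fin 4) : τ i j = 0 ∧ τ j i = 0 := by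
  have hji : ∀ k l, τ k l = star (τ l k) := fun k l => (h.isHermitian.apply k l).symm
  have hii : τ i i = 0 := by
    have h1 := hji i i
    apply Complex.ext hi
    have := congrArg Complex.im h1
    simp at this ⊢
    linarith
  have h2 := (h.submatrix ![i, j]).det_nonneg
  rw [det_fin_two] at h2
  simp [hii] at h2
  rw [hji j i] at h2
  have h3 := (Complex.le_def.1 h2).1
  simp at h3
  have h4 : τ i j = 0 := by
    apply Complex.ext <;> simp <;> nlinarith [sq_nonneg (τ i j).re, sq_nonneg (τ i j).im]
  exact ⟨h4, by rw [hji j i, h4]; simp⟩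

def wptL (A : Fin 3 → Matrix (Fin 4) (Fin 4) ℂ) : Matrix (Fin 4) (Fin 4) ℂ →ₗ[ℝ] (Fin 3 → ℝ) where
  toFun := wpt A
  map_add' x y := by ext i; simp [wpt, add_mul]
  map_smul' c x := by ext i; simp [wpt]

lemma density_convex : Convex ℝ {ρ : Matrix (Fin 4) (Fin 4) ℂ | IsDensity ρ} := by
  intro x hx y hy a b ha hb hab
  refine ⟨(hx.1.smul ha).add (hy.1.smul hb), ?_⟩
  rw [trace_add, trace_smul, trace_smul, hx.2, hy.2, ← add_smul, hab, one_smul]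

lemma jnr_convex (A : Fin 3 → Matrix (Fin 4) (Fin 4) ℂ) : Convex ℝ (JNR A) :=
  density_convex.linear_image (wptL A)

def sig (x : EuclideanSpace ℝ (Fin 3)) : Matrix (Fin 2) (Fin 2) ℂ :=
  (1 / 2 : ℝ) • (1 + x 0 • !![0, 1; 1, 0] + x 1 • !![0, -Complex.I; Complex.I, 0]
    + x 2 • !![1, 0; 0, -1])

lemma sig_eq (x : EuclideanSpace ℝ (Fin 3)) : sig x =
    !![((1 + x 2) / 2 : ℂ), (x 0 - x 1 * Complex.I) / 2;
      (x 0 + x 1 * Complex.I) / 2, (1 - x 2) / 2] := by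
  ext i j
  fin_cases i <;> fin_cases j <;> simp [sig] <;> ring

lemma sig_psd (x : EuclideanSpace ℝ (Fin 3)) (hx : x 0 ^ 2 + x 1 ^ 2 + x 2 ^ 2 ≤ 1) :
    (sig x).PosSemidef := by
  have hH : (sig x).IsHermitian := by
    rw [sig_eq]
    ext i j
    fin_cases i <;> fin_cases j <;> simp <;> ring
  refine PosSemidef.of_dotProduct_mulVec_nonneg hH fun v => ?_
  have him := hH.im_star_dotProduct_mulVec_self v
  rw [Complex.le_def]
  refine ⟨?_, by simpa using him.symm⟩
  rw [sig_eq]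
  simp [Matrix.mulVec, dotProduct, Fin.sum_univ_two]
  generalize x 0 = a at *
  generalize x 1 = b at *
  generalize x 2 = c at *
  generalize (v 0).re = p
  generalize (v 0).im = q
  generalize (v 1).re = r
  generalize (v 1).im = s
  have key : |a * (p * r + q * s) + b * (p * s - q * r) + c * ((p^2+q^2-r^2-s^2)/2)|
      ≤ (p^2+q^2+r^2+s^2)/2 := by
    apply abs_le_of_sq_le_sq _ (by positivity)
    have e : ((p^2+q^2+r^2+s^2)/2)^2 = (p*r+q*s)^2 + (p*s-q*r)^2 + ((p^2+q^2-r^2-s^2)/2)^2 := by ring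
    rw [e]
    generalize (p * r + q * s) = X
    generalize (p * s - q * r) = Y
    generalize ((p^2+q^2-r^2-s^2)/2) = Z
    nlinarith [sq_nonneg (a*Y-b*X), sq_nonneg (a*Z-c*X), sq_nonneg (b*Z-c*Y),
      mul_nonneg (sub_nonneg.2 hx) (by positivity : 0 ≤ X^2+Y^2+Z^2)]
  have := (abs_le.1 key).1
  nlinarith

lemma sig_of_psd {s : Matrix (Fin 2) (Fin 2) ℂ} (h : s.PosSemidef) (ht : s.trace = 1) :
    ∃ x : EuclideanSpace ℝ (Fin 3), x 0 ^ 2 + x 1 ^ 2 + x 2 ^ 2 ≤ 1 ∧ sig x = s := by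
  have hji : ∀ k l, s k l = star (s l k) := fun k l => (h.isHermitian.apply k l).symm
  have h00 := congrArg Complex.im (hji 0 0)
  have h11 := congrArg Complex.im (hji 1 1)
  have h10 := hji 1 0
  have hd := (Complex.le_def.1 h.det_nonneg).1
  have htr := congrArg Complex.re ht
  rw [det_fin_two, h10] at hd
  simp [trace, Fin.sum_univ_two] at h00 h11 hd htr
  refine ⟨!₂[2 * (s 0 1).re, -2 * (s 0 1).im, (s 0 0).re - (s 1 1).re], ?_, ?_⟩
  · simp
    have : (s 1 1).re = 1 - (s 0 0).re := by linarith
    have e0 : (s 0 0).im = 0 := by linarith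
    simp only [this, e0] at hd ⊢
    nlinarith
  · rw [sig_eq]
    ext i j
    fin_cases i <;> fin_cases j <;> apply Complex.ext <;> simp [h10] <;> linarith

lemma key_diag (A : Fin 3 → Matrix (Fin 4) (Fin 4) ℂ) (d : Fin 4 → ℝ) (hd : ∀ i, 0 ≤ d i)
    (F : Set (Fin 3 → ℝ))
    (hF : F = wpt A '' {τ | IsDensity τ ∧ ((τ * diagonal (fun i => (d i : ℂ))).trace).re = 0})
    (hF2 : convDim F = 2) (hne : ¬ IsEllipticDisk F) : ∃ i, ∀ j, j ≠ i → d j = 0 := by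
  by_contra! hcon
  obtain ⟨j1, -, hj1⟩ := hcon 0
  obtain ⟨j2, h12, hj2⟩ := hcon j1
  have hcomb : ∀ j1 j2 : Fin 4, j2 ≠ j1 → ∃ k : Fin 2 → Fin 4, k 0 ≠ k 1 ∧ k 0 ≠ j1 ∧ k 0 ≠ j2 ∧
      k 1 ≠ j1 ∧ k 1 ≠ j2 ∧ ∀ i, i = j1 ∨ i = j2 ∨ i = k 0 ∨ i = k 1 := by decide
  obtain ⟨k, hk01, hk0a, hk0b, hk1a, hk1b, hk⟩ := hcomb j1 j2 h12
  have htr : ∀ τ : Matrix (Fin 4) (Fin 4) ℂ,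
      ((τ * diagonal (fun i => (d i : ℂ))).trace).re = ∑ i, (τ i i).re * d i := by
    intro τ
    simp [trace, mul_diagonal]
  have hzero : ∀ τ : Matrix (Fin 4) (Fin 4) ℂ, IsDensity τ →
      ((τ * diagonal (fun i => (d i : ℂ))).trace).re = 0 → ∀ i, d i ≠ 0 →
      ∀ j, τ i j = 0 ∧ τ j i = 0 := by
    intro τ hτ h0 i hi
    rw [htr] at h0
    have hnn : ∀ i, 0 ≤ (τ i i).re := fun i => (Complex.le_def.1 (hτ.1.diag_nonneg (i := i))).1
    rw [Finset.sum_eq_zero_iff_of_nonneg (fun i _ => mul_nonneg (hnn i) (hd i))] at h0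
    have := h0 i (Finset.mem_univ _)
    exact psd_zero_row hτ.1 ((mul_eq_zero.1 this).resolve_right hi)
  have htrace : ∀ τ : Matrix (Fin 4) (Fin 4) ℂ, (∀ j, τ j1 j = 0 ∧ τ j j1 = 0) →
      (∀ j, τ j2 j = 0 ∧ τ j j2 = 0) → τ.trace = τ (k 0) (k 0) + τ (k 1) (k 1) := by
    intro τ h1 h2
    have : (Finset.univ : Finset (Fin 4)) = {j1, j2, k 0, k 1} := by
      ext i; simpa using hk i
    rw [trace, this, Finset.sum_insert, Finset.sum_insert, Finset.sum_insert, Finset.sum_singleton]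
    · simp [(h1 j1).1, (h2 j2).1]
    all_goals simp [*, Ne.symm, h12.symm, hk0a.symm, hk0b.symm, hk1a.symm, hk1b.symm]
  have sub : ∀ k0 k1 : Fin 4, (∀ i, i = j1 ∨ i = j2 ∨ i = k0 ∨ i = k1) → d k0 ≠ 0 →
      (∀ τ : Matrix (Fin 4) (Fin 4) ℂ, (∀ j, τ j1 j = 0 ∧ τ j j1 = 0) →
      (∀ j, τ j2 j = 0 ∧ τ j j2 = 0) → τ.trace = τ k0 k0 + τ k1 k1) → False := by
    intro k0 k1 hk h0 htrace
    have hs : F.Subsingleton := by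
      rw [hF]
      apply Set.Subsingleton.image
      have : ∀ τ, IsDensity τ → ((τ * diagonal (fun i => (d i : ℂ))).trace).re = 0 →
          τ = fun i j => if i = k1 ∧ j = k1 then 1 else 0 := by
        intro τ hτ hz
        have hz' := hzero τ hτ hz
        have ht := htrace τ (hz' j1 hj1) (hz' j2 hj2)
        rw [hτ.2, (hz' k0 h0 k0).1, zero_add] at ht
        ext i j
        by_cases hi : d i = 0
        · by_cases hj : d j = 0
          · have e1 : i = k1 := by
              rcases hk i with h | h | h | h <;> first | exact h | (subst h; contradiction)
            have e2 : j = k1 := by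
              rcases hk j with h | h | h | h <;> first | exact h | (subst h; contradiction)
            simp [e1, e2, ← ht]
          · rw [(hz' j hj i).2, if_neg]
            rintro ⟨rfl, rfl⟩
            rw [(hz' _ hj _).2] at ht; simp at ht
        · rw [(hz' i hi j).1, if_neg]
          rintro ⟨rfl, rfl⟩
          rw [(hz' _ hi _).2] at ht; simp at ht
      rintro τ ⟨h1, h2⟩ τ' ⟨h1', h2'⟩
      rw [this τ h1 h2, this τ' h1' h2']
    rw [convDim, direction_affineSpan, vectorSpan_of_subsingleton ℝ hs] at hF2
    simp at hF2
  have hd0 : d (k 0) = 0 := by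
    by_contra h
    exact sub _ _ hk h htrace
  have hd1 : d (k 1) = 0 := by
    by_contra h
    exact sub (k 1) (k 0) (fun i => by have := hk i; tauto) h
      (fun τ h1 h2 => by rw [htrace τ h1 h2, add_comm])
  apply hne
  let V : Matrix (Fin 4) (Fin 2) ℂ := (1 : Matrix (Fin 4) (Fin 4) ℂ).submatrix id k
  let P : Matrix (Fin 2) (Fin 2) ℂ →ₗ[ℝ] (Fin 3 → ℝ) :=
    { toFun := fun s => wptL A (V * s * Vᴴ)
      map_add' := fun s t => by rw [Matrix.mul_add, Matrix.add_mul, map_add]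
      map_smul' := fun c s => by
        rw [Matrix.mul_smul, Matrix.smul_mul, map_smul]; rfl }
  let N : EuclideanSpace ℝ (Fin 3) →ₗ[ℝ] Matrix (Fin 2) (Fin 2) ℂ :=
    { toFun := fun x => sig x - sig 0
      map_add' := fun x y => by
        simp only [sig, PiLp.add_apply, PiLp.zero_apply]
        module
      map_smul' := fun c x => by
        simp only [sig, PiLp.smul_apply, PiLp.zero_apply, RingHom.id_apply, smul_eq_mul]
        module }
  let T : EuclideanSpace ℝ (Fin 3) →ᵃ[ℝ] (Fin 3 → ℝ) :=
    (P ∘ₗ N).toAffineMap + AffineMap.const ℝ _ (P (sig 0))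
  have hT : ∀ x, T x = wpt A (V * sig x * Vᴴ) := by
    intro x
    have : T x = P (sig x - sig 0) + P (sig 0) := by simp [T, N]
    rw [this, ← map_add, sub_add_cancel]; rfl
  refine ball_elliptic T F ?_ hF2
  have hV : ∀ s : Matrix (Fin 2) (Fin 2) ℂ, ∀ i j, (V * s * Vᴴ) i j =
      (if i = k 0 then (if j = k 0 then s 0 0 else 0) + (if j = k 1 then s 0 1 else 0) else 0) +
      (if i = k 1 then (if j = k 0 then s 1 0 else 0) + (if j = k 1 then s 1 1 else 0) else 0) := by
    intro s i j
    simp only [mul_apply, V, Fin.sum_univ_two, conjTranspose_apply, submatrix_apply, one_apply, id]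
    split_ifs <;> simp <;> ring
  have hball : ∀ x : EuclideanSpace ℝ (Fin 3), x ∈ Metric.closedBall (0 : EuclideanSpace ℝ (Fin 3)) 1
      ↔ x 0 ^ 2 + x 1 ^ 2 + x 2 ^ 2 ≤ 1 := by
    intro x
    rw [mem_closedBall_zero_iff, ← sq_le_one_iff₀ (norm_nonneg x), EuclideanSpace.norm_sq_eq]
    simp [Fin.sum_univ_three]
  rw [hF]
  ext y
  constructor
  · rintro ⟨τ, ⟨hτ, hz⟩, rfl⟩
    have hz' := hzero τ hτ hz
    obtain ⟨x, hx, hs⟩ := sig_of_psd (hτ.1.submatrix k) (by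
      rw [← hτ.2, htrace τ (hz' j1 hj1) (hz' j2 hj2)]; simp [trace, Fin.sum_univ_two])
    refine ⟨x, (hball x).2 hx, ?_⟩
    rw [hT]
    congr 1
    rw [hs]
    ext i j
    rw [hV]
    simp only [submatrix_apply]
    have q1 := hz' j1 hj1
    have q2 := hz' j2 hj2
    rcases hk i with h | h | h | h <;> rcases hk j with h' | h' | h' | h' <;>
      simp [h, h', q1, q2, hk01, hk01.symm, hk0a.symm, hk0b.symm, hk1a.symm, hk1b.symm]
  · rintro ⟨x, hx, rfl⟩
    rw [hT]
    refine ⟨_, ⟨⟨(sig_psd x ((hball x).1 hx)).mul_mul_conjTranspose_same V, ?_⟩, ?_⟩, rfl⟩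
    · rw [htrace]
      · rw [hV, hV, sig_eq]
        simp [hk01, hk01.symm]
        ring
      · intro j; simp [hV, hk0a.symm, hk1a.symm]
      · intro j; simp [hV, hk0b.symm, hk1b.symm]
    · rw [htr]
      apply Finset.sum_eq_zero
      intro i _
      rcases hk i with h | h | h | h <;> simp [hV, h, hd0, hd1, hk0a.symm, hk1a.symm, hk0b.symm, hk1b.symm]

lemma density_conj {ρ U : Matrix (Fin 4) (Fin 4) ℂ} (h : IsDensity ρ) (hU : U * Uᴴ = 1) :
    IsDensity (Uᴴ * ρ * U) := by
  refine ⟨h.1.conjTranspose_mul_mul_same U, ?_⟩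
  rw [trace_mul_comm, ← mul_assoc, hU, one_mul, h.2]

lemma trace_conj {ρ U X : Matrix (Fin 4) (Fin 4) ℂ} (hU : U * Uᴴ = 1) :
    ((Uᴴ * ρ * U) * (Uᴴ * X * U)).trace = (ρ * X).trace := by
  have : (Uᴴ * ρ * U) * (Uᴴ * X * U) = Uᴴ * (ρ * (U * Uᴴ) * X * U) := by noncomm_ring
  rw [this, hU, trace_mul_comm, mul_assoc, hU, mul_one, mul_one]

lemma key (A : Fin 3 → Matrix (Fin 4) (Fin 4) ℂ) (B : Matrix (Fin 4) (Fin 4) ℂ)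
    (hB : B.IsHermitian) (hpos : ∀ ρ, IsDensity ρ → 0 ≤ ((ρ * B).trace).re)
    (F : Set (Fin 3 → ℝ))
    (hF : F = wpt A '' {ρ | IsDensity ρ ∧ ((ρ * B).trace).re = 0})
    (hF2 : convDim F = 2) (hne : ¬ IsEllipticDisk F) :
    ∃ a : Fin 4 → ℂ, B = vecMulVec a (star a) := by
  obtain ⟨U, d, hU, hU', hBU⟩ : ∃ (U : Matrix (Fin 4) (Fin 4) ℂ) (d : Fin 4 → ℝ),
      U * Uᴴ = 1 ∧ Uᴴ * U = 1 ∧ B = U * diagonal (fun i => (d i : ℂ)) * Uᴴ := by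
    refine ⟨hB.eigenvectorUnitary, hB.eigenvalues, ?_, ?_, ?_⟩
    · exact Unitary.coe_mul_star_self _
    · exact Unitary.coe_star_mul_self _
    · have := hB.spectral_theorem
      rw [Unitary.conjStarAlgAut_apply] at this
      exact this
  set D := diagonal (fun i => (d i : ℂ)) with hD
  have hDB : D = Uᴴ * B * U := by
    have : Uᴴ * (U * D * Uᴴ) * U = (Uᴴ * U) * D * (Uᴴ * U) := by noncomm_ring
    rw [hBU, this, hU', one_mul, mul_one]
  have hUU : Uᴴ * Uᴴᴴ = 1 := by rw [conjTranspose_conjTranspose, hU']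
  have hback : ∀ τ, IsDensity τ → ∃ ρ, IsDensity ρ ∧ τ = Uᴴ * ρ * U := by
    intro τ hτ
    refine ⟨U * τ * Uᴴ, ?_, ?_⟩
    · have := density_conj hτ hUU
      rwa [conjTranspose_conjTranspose] at this
    · have : Uᴴ * (U * τ * Uᴴ) * U = (Uᴴ * U) * τ * (Uᴴ * U) := by noncomm_ring
      rw [this, hU', one_mul, mul_one]
  have hdpos : ∀ i, 0 ≤ d i := by
    intro i
    have hs : IsDensity (diagonal (Pi.single i (1:ℂ))) := by
      constructor
      · apply PosSemidef.diagonal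
        intro j
        by_cases h : j = i
        · subst h; simp
        · simp [h]
      · simp [trace_diagonal]
    obtain ⟨ρ, hρ, e⟩ := hback _ hs
    have h1 := hpos ρ hρ
    rw [← trace_conj hU, ← e, ← hDB, hD, diagonal_mul_diagonal, trace_diagonal] at h1
    simpa [Pi.single_apply] using h1
  obtain ⟨i, hi⟩ := key_diag (fun m => Uᴴ * A m * U) d hdpos F (by
    rw [hF]
    ext y
    constructor
    · rintro ⟨ρ, ⟨h1, h2⟩, rfl⟩
      refine ⟨Uᴴ * ρ * U, ⟨density_conj h1 hU, ?_⟩, ?_⟩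
      · rw [← hD, hDB, trace_conj hU, h2]
      · ext m; simp only [wpt]; rw [trace_conj hU]
    · rintro ⟨τ, ⟨h1, h2⟩, rfl⟩
      obtain ⟨ρ, hρ, rfl⟩ := hback τ h1
      rw [← hD, hDB, trace_conj hU] at h2
      refine ⟨ρ, ⟨hρ, h2⟩, ?_⟩
      ext m; simp only [wpt]; rw [trace_conj hU]) hF2 hne
  refine ⟨fun j => (Real.sqrt (d i) : ℂ) * U j i, ?_⟩
  rw [hBU]
  ext j l
  rw [mul_apply, Finset.sum_eq_single i]
  · have hs : ((Real.sqrt (d i) : ℝ) : ℂ) * (Real.sqrt (d i) : ℝ) = (d i : ℂ) := by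
      rw [← Complex.ofReal_mul, Real.mul_self_sqrt (hdpos i)]
    simp [hD, mul_diagonal, vecMulVec_apply]
    rw [← hs]; ring
  · intro m _ hm
    simp [hD, mul_diagonal, hi m hm]
  · simp

lemma dotR_wpt (A : Fin 3 → Matrix (Fin 4) (Fin 4) ℂ) (u : Fin 3 → ℝ)
    (ρ : Matrix (Fin 4) (Fin 4) ℂ) :
    dotR u (wpt A ρ) = ((ρ * ∑ i, u i • A i).trace).re := by
  simp [dotR, wpt, Fin.sum_univ_three, mul_add]

lemma trace_scalar {ρ : Matrix (Fin 4) (Fin 4) ℂ} (h : IsDensity ρ) (l : ℝ) :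
    ((ρ * (l • (1 : Matrix (Fin 4) (Fin 4) ℂ))).trace).re = l := by
  simp [h.2]

lemma face_data (A : Fin 3 → Matrix (Fin 4) (Fin 4) ℂ) (hA : ∀ i, (A i).IsHermitian)
    (hdim : convDim (JNR A) = 3) (F : Set (Fin 3 → ℝ)) (hF : IsNonEllipticFace (JNR A) F) :
    ∃ (u : Fin 3 → ℝ) (l : ℝ) (a : Fin 4 → ℂ), (∀ y ∈ JNR A, l ≤ dotR u y) ∧
      F = {x ∈ JNR A | dotR u x = l} ∧ ∑ i, u i • A i = l • 1 + vecMulVec a (star a) := by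
  obtain ⟨u, l, h1, h2⟩ := face_exposed _ F (jnr_convex A) hdim hF.1 hF.2.1
  have hB : (∑ i, u i • A i - l • (1 : Matrix (Fin 4) (Fin 4) ℂ)).IsHermitian := by
    rw [IsHermitian, conjTranspose_sub, conjTranspose_sum]
    simp [conjTranspose_smul, fun i => (hA i).eq]
  have ht : ∀ ρ, IsDensity ρ → ((ρ * (∑ i, u i • A i - l • (1 : Matrix (Fin 4) (Fin 4) ℂ))).trace).re
      = dotR u (wpt A ρ) - l := by
    intro ρ hρ
    rw [mul_sub, trace_sub, Complex.sub_re, trace_scalar hρ, dotR_wpt]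
  obtain ⟨a, ha⟩ := key A _ hB (fun ρ hρ => by
      rw [ht ρ hρ]; linarith [h1 _ ⟨ρ, hρ, rfl⟩]) F (by
      rw [h2]
      ext y
      constructor
      · rintro ⟨⟨ρ, hρ, rfl⟩, h⟩
        exact ⟨ρ, ⟨hρ, by rw [ht ρ hρ, h, sub_self]⟩, rfl⟩
      · rintro ⟨ρ, ⟨hρ, h⟩, rfl⟩
        rw [ht ρ hρ] at h
        exact ⟨⟨ρ, hρ, rfl⟩, by linarith⟩) hF.2.1 hF.2.2
  exact ⟨u, l, a, h1, h2, by rw [← ha]; abel⟩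

lemma indep (A : Fin 3 → Matrix (Fin 4) (Fin 4) ℂ) (hdim : convDim (JNR A) = 3)
    (w : Fin 3 → ℝ) (c : ℝ) (h : ∑ i, w i • A i = c • 1) : w = 0 ∧ c = 0 := by
  obtain ⟨hne, htop⟩ := span_top hdim
  have hc : ∀ x ∈ JNR A, dotR w x = c := by
    rintro _ ⟨ρ, hρ, rfl⟩
    rw [dotR_wpt, h, trace_scalar hρ]
  have hk : (affineSpan ℝ (JNR A)).direction ≤ LinearMap.ker (dotL w) := by
    rw [direction_affineSpan, vectorSpan_def, Submodule.span_le]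
    rintro _ ⟨a, ha, b, hb, rfl⟩
    have e1 : dotL w a = c := hc a ha
    have e2 : dotL w b = c := hc b hb
    simp [e1, e2]
  rw [htop, AffineSubspace.direction_top] at hk
  have hw : w = 0 := by
    ext i
    have : dotL w (Pi.single i 1) = 0 := hk Submodule.mem_top
    simpa [dotL, dotR, Pi.single_apply] using this
  refine ⟨hw, ?_⟩
  obtain ⟨x, hx⟩ := hne
  rw [← hc x hx, hw]; simp [dotR]

lemma not_par (A : Fin 3 → Matrix (Fin 4) (Fin 4) ℂ) (hdim : convDim (JNR A) = 3)
    {F F' : Set (Fin 3 → ℝ)} (hF2 : convDim F = 2) (hne : F ≠ F')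
    {u u' : Fin 3 → ℝ} {l l' : ℝ} {a a' : Fin 4 → ℂ}
    (hF : F = {x ∈ JNR A | dotR u x = l}) (hF' : F' = {x ∈ JNR A | dotR u' x = l'})
    (h : ∑ i, u i • A i = l • 1 + vecMulVec a (star a))
    (h' : ∑ i, u' i • A i = l' • 1 + vecMulVec a' (star a')) (t : ℂ) : a ≠ t • a' := by
  intro hat
  set r := Complex.normSq t with hr
  have hv : vecMulVec a (star a) = r • vecMulVec a' (star a') := by
    ext i j
    simp [hat, vecMulVec_apply, hr, ← Complex.mul_conj]
    ring
  have := indep A hdim (u - r • u') (l - r * l') (by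
    have e : ∑ i, (u - r • u') i • A i = ∑ i, u i • A i - r • ∑ i, u' i • A i := by
      simp only [Pi.sub_apply, Pi.smul_apply, Finset.smul_sum, ← Finset.sum_sub_distrib]
      apply Finset.sum_congr rfl
      intro i _
      rw [sub_smul, smul_eq_mul, mul_smul]
    rw [e, h, h', hv]
    module)
  obtain ⟨e1, e2⟩ := this
  have hu : u = r • u' := sub_eq_zero.1 e1
  have hl : l = r * l' := sub_eq_zero.1 e2
  have hdot : ∀ x, dotR u x = r * dotR u' x := by
    intro x
    simp [hu, dotR, Finset.mul_sum, mul_assoc]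
  by_cases h0 : r = 0
  · have : F = JNR A := by
      rw [hF]
      ext x
      simp [hdot, hl, h0]
    rw [this] at hF2; omega
  · apply hne
    rw [hF, hF']
    ext x
    simp [hdot, hl, h0]

lemma coef {a1 a2 a3 : Fin 4 → ℂ} (h12 : ∀ t : ℂ, a1 ≠ t • a2) (h21 : ∀ t : ℂ, a2 ≠ t • a1)
    (h23 : ∀ t : ℂ, a2 ≠ t • a3) {c1 c2 c3 : ℝ}
    (h : c1 • vecMulVec a1 (star a1) + c2 • vecMulVec a2 (star a2) + c3 • vecMulVec a3 (star a3) = 0) :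
    c2 = 0 := by
  have h10 : a1 ≠ 0 := by simpa using h12 0
  have hn : star a1 ⬝ᵥ a1 ≠ 0 := by simpa using h10
  let v := (star a1 ⬝ᵥ a1) • a2 - (star a1 ⬝ᵥ a2) • a1
  have hv1 : star a1 ⬝ᵥ v = 0 := by
    simp [v, dotProduct_sub, dotProduct_smul]; ring
  have hv2 : star a2 ⬝ᵥ v ≠ 0 := by
    intro hv2
    have : star v ⬝ᵥ v = 0 := by
      have e : star v = star (star a1 ⬝ᵥ a1) • star a2 - star (star a1 ⬝ᵥ a2) • star a1 := by
        simp only [v, star_sub, star_smul]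
      rw [e, sub_dotProduct, smul_dotProduct, smul_dotProduct, hv1, hv2]; simp
    have hv : v = 0 := by simpa using this
    apply h21 ((star a1 ⬝ᵥ a1)⁻¹ * (star a1 ⬝ᵥ a2))
    have : (star a1 ⬝ᵥ a1) • a2 = (star a1 ⬝ᵥ a2) • a1 := sub_eq_zero.1 hv
    rw [mul_smul, ← this, smul_smul, inv_mul_cancel₀ hn, one_smul]
  by_contra hc
  have hm := congrArg (fun M => M *ᵥ v) h
  have hvm : ∀ b : Fin 4 → ℂ, vecMulVec b (star b) *ᵥ v = (star b ⬝ᵥ v) • b := by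
    intro b
    ext i
    simp [mulVec, vecMulVec_apply, dotProduct, Finset.sum_mul]
    ring_nf
  simp only [add_mulVec, smul_mulVec, hvm, hv1, zero_mulVec, zero_smul, smul_zero, zero_add] at hm
  apply h23 (-((c2 : ℂ) * (star a2 ⬝ᵥ v))⁻¹ * (c3 * (star a3 ⬝ᵥ v)))
  have hne : ((c2 : ℂ) * (star a2 ⬝ᵥ v)) ≠ 0 := mul_ne_zero (by exact_mod_cast hc) hv2
  ext i
  have := congrFun hm i
  simp only [Pi.add_apply, Pi.smul_apply, Complex.real_smul, smul_eq_mul, Pi.zero_apply] at this ⊢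
  rw [← mul_right_inj' hne]
  have e : (c2 : ℂ) * (star a2 ⬝ᵥ v) * (-((c2 : ℂ) * (star a2 ⬝ᵥ v))⁻¹ * (c3 * (star a3 ⬝ᵥ v)) * a3 i)
    = - (c3 * (star a3 ⬝ᵥ v)) * a3 i := by
    rw [← mul_assoc, ← mul_assoc, mul_neg, mul_inv_cancel₀ hne]; ring
  rw [e]
  linear_combination this

/-- The intersection of three mutually distinct non-elliptic faces
of `W` is a singleton which is a corner point of `W`. -/
theorem stmt2 (A : Fin 3 → Matrix (Fin 4) (Fin 4) ℂ)
    (hA : ∀ i, (A i).IsHermitian)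
    (hdim : convDim (JNR A) = 3)
    (F₁ F₂ F₃ : Set (Fin 3 → ℝ))
    (hF₁ : IsNonEllipticFace (JNR A) F₁)
    (hF₂ : IsNonEllipticFace (JNR A) F₂)
    (hF₃ : IsNonEllipticFace (JNR A) F₃)
    (h12 : F₁ ≠ F₂) (h13 : F₁ ≠ F₃) (h23 : F₂ ≠ F₃) :
    ∃ p, F₁ ∩ F₂ ∩ F₃ = {p} ∧ IsCornerPoint (JNR A) p := by
  obtain ⟨u1, l1, a1, p1, s1, e1⟩ := face_data A hA hdim F₁ hF₁
  obtain ⟨u2, l2, a2, p2, s2, e2⟩ := face_data A hA hdim F₂ hF₂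
  obtain ⟨u3, l3, a3, p3, s3, e3⟩ := face_data A hA hdim F₃ hF₃
  have n12 := not_par A hdim hF₁.2.1 h12 s1 s2 e1 e2
  have n21 := not_par A hdim hF₂.2.1 h12.symm s2 s1 e2 e1
  have n13 := not_par A hdim hF₁.2.1 h13 s1 s3 e1 e3
  have n31 := not_par A hdim hF₃.2.1 h13.symm s3 s1 e3 e1
  have n23 := not_par A hdim hF₂.2.1 h23 s2 s3 e2 e3
  have n32 := not_par A hdim hF₃.2.1 h23.symm s3 s2 e3 e2
  -- a common kernel vector
  obtain ⟨v, hv0, hv⟩ : ∃ v : Fin 4 → ℂ, v ≠ 0 ∧ star a1 ⬝ᵥ v = 0 ∧ star a2 ⬝ᵥ v = 0 ∧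
      star a3 ⬝ᵥ v = 0 := by
    let f : (Fin 4 → ℂ) →ₗ[ℂ] (Fin 3 → ℂ) := Matrix.mulVecLin (Matrix.of ![star a1, star a2, star a3])
    have hf : LinearMap.ker f ≠ ⊥ := LinearMap.ker_ne_bot_of_finrank_lt (by simp)
    obtain ⟨v, hv, hv0⟩ := Submodule.exists_mem_ne_zero_of_ne_bot hf
    have hv' : f v = 0 := hv
    exact ⟨v, hv0, congrFun hv' 0, congrFun hv' 1, congrFun hv' 2⟩
  obtain ⟨v1, v2, v3⟩ := hv
  have hn : star v ⬝ᵥ v ≠ 0 := by simpa using hv0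
  have hn0 : 0 ≤ star v ⬝ᵥ v := dotProduct_star_self_nonneg v
  let ρ : Matrix (Fin 4) (Fin 4) ℂ := (star v ⬝ᵥ v)⁻¹ • vecMulVec v (star v)
  have hρ : IsDensity ρ := by
    refine ⟨(posSemidef_vecMulVec_self_star v).smul (inv_nonneg.2 hn0), ?_⟩
    simp only [ρ, trace_smul, trace_vecMulVec, smul_eq_mul]
    rw [dotProduct_comm v, inv_mul_cancel₀ hn]
  have htr : ∀ a : Fin 4 → ℂ, star a ⬝ᵥ v = 0 → (ρ * vecMulVec a (star a)).trace = 0 := by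
    intro a ha
    have h' : star v ⬝ᵥ a = 0 := by
      have := congrArg star ha
      rw [star_dotProduct, star_star, star_zero] at this
      rw [← this, dotProduct_comm]
    simp [ρ, vecMulVec_mul_vecMulVec, h']
  have hd : ∀ (u : Fin 3 → ℝ) (l : ℝ) (a : Fin 4 → ℂ), star a ⬝ᵥ v = 0 →
      ∑ i, u i • A i = l • 1 + vecMulVec a (star a) → dotR u (wpt A ρ) = l := by
    intro u l a ha h
    rw [dotR_wpt, h, mul_add, trace_add, htr a ha, add_zero, trace_scalar hρ]
  have d1 := hd u1 l1 a1 v1 e1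
  have d2 := hd u2 l2 a2 v2 e2
  have d3 := hd u3 l3 a3 v3 e3
  have hW : wpt A ρ ∈ JNR A := ⟨ρ, hρ, rfl⟩
  have hli : LinearIndependent ℝ ![u1, u2, u3] := by
    rw [Fintype.linearIndependent_iff]
    intro g hg
    simp only [Fin.sum_univ_three, Matrix.cons_val_zero, Matrix.cons_val_one, Matrix.cons_val] at hg
    have hl : g 0 * l1 + g 1 * l2 + g 2 * l3 = 0 := by
      have : dotL (wpt A ρ) (g 0 • u1 + g 1 • u2 + g 2 • u3) = 0 := by rw [hg, map_zero]
      have hc : ∀ u, dotL (wpt A ρ) u = dotR u (wpt A ρ) := fun u => by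
        simp [dotL, dotR, mul_comm]
      rw [map_add, map_add, map_smul, map_smul, map_smul, hc, hc, hc, d1, d2, d3] at this
      simpa using this
    have hsum : g 0 • (∑ i, u1 i • A i) + g 1 • (∑ i, u2 i • A i) + g 2 • (∑ i, u3 i • A i) = 0 := by
      have h0 := congrFun hg 0
      have h1 := congrFun hg 1
      have h2 := congrFun hg 2
      simp only [Pi.add_apply, Pi.smul_apply, smul_eq_mul, Pi.zero_apply] at h0 h1 h2
      have : g 0 • (∑ i, u1 i • A i) + g 1 • (∑ i, u2 i • A i) + g 2 • (∑ i, u3 i • A i) =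
          (g 0 * u1 0 + g 1 * u2 0 + g 2 * u3 0) • A 0 + (g 0 * u1 1 + g 1 * u2 1 + g 2 * u3 1) • A 1
          + (g 0 * u1 2 + g 1 * u2 2 + g 2 * u3 2) • A 2 := by
        simp only [Fin.sum_univ_three]; module
      rw [this, h0, h1, h2]; simp
    rw [e1, e2, e3] at hsum
    have hz : g 0 • vecMulVec a1 (star a1) + g 1 • vecMulVec a2 (star a2)
        + g 2 • vecMulVec a3 (star a3) = 0 := by
      have : g 0 • (l1 • (1 : Matrix (Fin 4) (Fin 4) ℂ) + vecMulVec a1 (star a1))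
          + g 1 • (l2 • (1 : Matrix (Fin 4) (Fin 4) ℂ) + vecMulVec a2 (star a2))
          + g 2 • (l3 • (1 : Matrix (Fin 4) (Fin 4) ℂ) + vecMulVec a3 (star a3)) =
          (g 0 * l1 + g 1 * l2 + g 2 * l3) • (1 : Matrix (Fin 4) (Fin 4) ℂ) +
          (g 0 • vecMulVec a1 (star a1) + g 1 • vecMulVec a2 (star a2)
          + g 2 • vecMulVec a3 (star a3)) := by module
      rw [this, hl, zero_smul, zero_add] at hsum
      exact hsum
    have c1 : g 1 = 0 := coef n12 n21 n23 hz
    have c0 : g 0 = 0 := coef (a1 := a2) (a2 := a1) (a3 := a3) n21 n12 n13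
      (c1 := g 1) (c3 := g 2) (by rw [← hz]; abel)
    have c2 : g 2 = 0 := coef (a1 := a1) (a2 := a3) (a3 := a2) n13 n31 n32
      (c1 := g 0) (c3 := g 1) (by rw [← hz]; abel)
    intro i
    fin_cases i <;> assumption
  have hspan := hli.span_eq_top_of_card_eq_finrank (by simp)
  refine ⟨wpt A ρ, ?_, hW, ?_⟩
  · ext x
    rw [s1, s2, s3]
    constructor
    · rintro ⟨⟨⟨hx, x1⟩, ⟨-, x2⟩⟩, ⟨-, x3⟩⟩
      have hk : Submodule.span ℝ (Set.range ![u1, u2, u3]) ≤ LinearMap.ker (dotL (x - wpt A ρ)) := by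
        have hc : ∀ u, dotL (x - wpt A ρ) u = dotR u x - dotR u (wpt A ρ) := fun u => by
          simp [dotL, dotR, mul_comm, sub_mul, mul_sub, Finset.sum_sub_distrib]
        rw [Submodule.span_le]
        rintro _ ⟨i, rfl⟩
        fin_cases i <;> simp [hc, *]
      rw [hspan] at hk
      have : x - wpt A ρ = 0 := by
        ext i
        have : dotL (x - wpt A ρ) (Pi.single i 1) = 0 := hk Submodule.mem_top
        simpa [dotL, dotR, Pi.single_apply] using this
      exact sub_eq_zero.1 this
    · rintro rfl
      exact ⟨⟨⟨hW, d1⟩, ⟨hW, d2⟩⟩, ⟨hW, d3⟩⟩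
  · rw [eq_top_iff, ← hspan]
    apply Submodule.span_mono
    have hc : ∀ u y, dotR (y - wpt A ρ) u = dotR u y - dotR u (wpt A ρ) := fun u y => by
      simp [dotR, mul_comm, mul_sub, Finset.sum_sub_distrib]
    rintro _ ⟨i, rfl⟩ y hy
    rw [hc]
    have := p1 y hy
    have := p2 y hy
    have := p3 y hy
    fin_cases i <;> simp [*]
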